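/- arXiv:0812.0047 — 2 statements merged into one kernel-verified Lean document; each statement's English description precedes it below -/
import Mathlib

section
/- Every natural number is expressible as a sum of three triangular numbers t_a + t_b + t_c with a, b, c ≥ 0 (Gauss's theorem, used in the paper to describe the vertex set of the associated graph). -/
/-!
`n = t_a + t_b + t_c` means `8 * n + 3 = (2 * a + 1) ^ 2 + (2 * b + 1) ^ 2 + (2 * c + 1) ^ 2`, and
three squares with sum `3` modulo `4` are all odd, so it is enough to write every `m ≡ 3 [MOD 8]`
as a sum of three squares.

If `-d` is a square modulo `d * m - 1`, then `m` is a diagonal entry of a positive definite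
integer matrix of size `3` and determinant `1`. For `m ≡ 3 [MOD 8]` such a `d` comes from
Dirichlet's theorem, which gives a prime `p ≡ 1 [MOD 4]` with `d * m = 2 * p + 1`, and from
quadratic reciprocity.

By Hermite's inequality, a positive definite integral form of determinant `1` in at most five
variables takes the value `1` at a vector of some basis. Splitting off this vector lowers the
number of variables, so that the matrix has the form `Vᵀ * V` and its diagonal entries are sums
of squares.
-/

section Condensation

open Matrix

variable {R : Type*} [CommRing R] {n : ℕ}

/-- The block triangular matrix `[[a, r], [0, V]]`, whose first row is `a` followed by `r`. -/
def blockUpper (a : R) (r : Fin n → R) (V : Matrix (Fin n) (Fin n) R) :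
    Matrix (Fin (n + 1)) (Fin (n + 1)) R :=
  of (vecCons (vecCons a r) fun i ↦ vecCons 0 (V i))

/-- The Chio condensation of a matrix with respect to its upper left entry: the Schur complement
of this entry, multiplied by the entry so that no division occurs. -/
def condensation (M : Matrix (Fin (n + 1)) (Fin (n + 1)) R) : Matrix (Fin n) (Fin n) R :=
  M 0 0 • M.submatrix Fin.succ Fin.succ - vecMulVec (fun i ↦ M i.succ 0) (fun j ↦ M 0 j.succ)

theorem condensation_apply (M : Matrix (Fin (n + 1)) (Fin (n + 1)) R) (i j : Fin n) :
    condensation M i j = M 0 0 * M i.succ j.succ - M i.succ 0 * M 0 j.succ :=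
  rfl

theorem isSymm_condensation {M : Matrix (Fin (n + 1)) (Fin (n + 1)) R} (hM : M.IsSymm) :
    (condensation M).IsSymm := by
  refine .ext fun i j ↦ ?_
  rw [condensation_apply, condensation_apply, hM.apply i.succ j.succ, hM.apply 0 j.succ,
    hM.apply i.succ 0, mul_comm (M 0 j.succ)]

theorem det_blockUpper (a : R) (r : Fin n → R) (V : Matrix (Fin n) (Fin n) R) :
    (blockUpper a r V).det = a * V.det := by
  have hV : (blockUpper a r V).submatrix Fin.succ Fin.succ = V := rfl
  rw [det_succ_column_zero, Fin.sum_univ_succ, Fin.succAbove_zero, hV]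
  simp [blockUpper]

theorem blockUpper_transpose_mul_eq_blockUpper_condensation
    (M : Matrix (Fin (n + 1)) (Fin (n + 1)) R) :
    (blockUpper 1 (fun i ↦ -M i.succ 0) (M 0 0 • 1))ᵀ * M =
      blockUpper (M 0 0) (fun j ↦ M 0 j.succ) (condensation M) := by
  ext i j
  cases i using Fin.cases <;> cases j using Fin.cases <;>
    simp [blockUpper, condensation_apply, mul_apply, Fin.sum_univ_succ, one_apply,
      neg_add_eq_sub, mul_comm]

theorem pow_mul_det_eq_mul_det_condensation (M : Matrix (Fin (n + 1)) (Fin (n + 1)) R) :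
    M 0 0 ^ n * M.det = M 0 0 * (condensation M).det := by
  simpa [det_blockUpper] using congrArg det (blockUpper_transpose_mul_eq_blockUpper_condensation M)

theorem det_condensation [IsDomain R] {M : Matrix (Fin (n + 2)) (Fin (n + 2)) R}
    (h : M 0 0 ≠ 0) : (condensation M).det = M 0 0 ^ n * M.det :=
  mul_left_cancel₀ h <| by rw [← pow_mul_det_eq_mul_det_condensation, pow_succ', mul_assoc]

theorem eq_blockUpper_transpose_mul_self {M : Matrix (Fin (n + 1)) (Fin (n + 1)) R}
    {V : Matrix (Fin n) (Fin n) R} (hM : M.IsSymm) (h_one : M 0 0 = 1)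
    (hV : condensation M = Vᵀ * V) :
    M = (blockUpper 1 (fun j ↦ M 0 j.succ) V)ᵀ * blockUpper 1 (fun j ↦ M 0 j.succ) V := by
  ext i j
  cases i using Fin.cases with
  | zero => cases j using Fin.cases <;> simp [blockUpper, mul_apply, Fin.sum_univ_succ, h_one]
  | succ i =>
    cases j using Fin.cases with
    | zero => simp [blockUpper, mul_apply, Fin.sum_univ_succ, hM.apply]
    | succ j =>
      have hij := congrFun₂ hV i j
      rw [condensation_apply, h_one, one_mul, mul_apply, sub_eq_iff_eq_add',
        hM.apply 0 i.succ] at hij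
      simpa [blockUpper, mul_apply, Fin.sum_univ_succ] using hij

theorem mul_dotProduct_mulVec_vecCons {M : Matrix (Fin (n + 1)) (Fin (n + 1)) R}
    (hM : M.IsSymm) (t : R) (y : Fin n → R) :
    M 0 0 * (vecCons t y ⬝ᵥ M *ᵥ vecCons t y) =
      (M 0 0 * t + (fun j ↦ M 0 j.succ) ⬝ᵥ y) ^ 2 + y ⬝ᵥ condensation M *ᵥ y := by
  set r : Fin n → R := fun j ↦ M 0 j.succ with hr
  have hcol : (fun i : Fin n ↦ M i.succ 0) = r := funext fun i ↦ hM.apply 0 i.succ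
  have hMx : M *ᵥ vecCons t y =
      vecCons (M 0 0 * t + r ⬝ᵥ y) (t • r + M.submatrix Fin.succ Fin.succ *ᵥ y) := by
    ext i
    cases i using Fin.cases <;>
      simp [r, mulVec, dotProduct, Fin.sum_univ_succ, hM.apply, mul_comm]
  simp only [hMx, condensation, hcol, ← hr, sub_mulVec, smul_mulVec, vecMulVec_mulVec,
    cons_dotProduct_cons, dotProduct_add, dotProduct_sub, dotProduct_smul, smul_eq_mul,
    op_smul_eq_smul]
  rw [dotProduct_comm y r]
  ring

end Condensation

section PosDef

open Matrix

theorem posDef_iff_of_isSymm {ι R : Type*} [Fintype ι] [Ring R] [PartialOrder R] [StarRing R]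
    [TrivialStar R] {M : Matrix ι ι R} (hM : M.IsSymm) :
    M.PosDef ↔ ∀ x ≠ 0, 0 < x ⬝ᵥ M *ᵥ x := by
  simp [posDef_iff_dotProduct_mulVec, hM]

theorem posDef_transpose_mul_mul {ι R : Type*} [Fintype ι] [DecidableEq ι] [CommRing R]
    [PartialOrder R] [StarRing R] [TrivialStar R] {M U : Matrix ι ι R} (hM : M.PosDef)
    (hU : IsUnit U.det) : (Uᵀ * M * U).PosDef := by
  simpa using hM.conjTranspose_mul_mul_same
    (mulVec_injective_of_isUnit ((isUnit_iff_isUnit_det U).mpr hU))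

theorem posDef_iff_posDef_condensation {R : Type*} [CommRing R] [LinearOrder R]
    [IsStrictOrderedRing R] [StarRing R] [TrivialStar R] {n : ℕ}
    {M : Matrix (Fin (n + 1)) (Fin (n + 1)) R} (hM : M.IsSymm) :
    M.PosDef ↔ 0 < M 0 0 ∧ (condensation M).PosDef := by
  rw [posDef_iff_of_isSymm hM, posDef_iff_of_isSymm (isSymm_condensation hM)]
  refine ⟨fun h ↦ ?_, fun ⟨h₀, h⟩ x hx ↦ ?_⟩
  · have h₀ : 0 < M 0 0 := by simpa using h (Pi.single 0 1) (by simp)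
    refine ⟨h₀, fun y hy ↦ ?_⟩
    let r : Fin n → R := fun j ↦ M 0 j.succ
    -- The tail `M 0 0 • y` allows a head for which the completed square vanishes.
    let x : Fin (n + 1) → R := vecCons (-(r ⬝ᵥ y)) (M 0 0 • y)
    have hx : x ≠ 0 := by simp [x, h₀.ne', hy]
    have hvalue : M 0 0 * (x ⬝ᵥ M *ᵥ x) = M 0 0 ^ 2 * (y ⬝ᵥ condensation M *ᵥ y) := by
      have hsq : M 0 0 * -(r ⬝ᵥ y) + r ⬝ᵥ (M 0 0 • y) = 0 := by simp
      rw [mul_dotProduct_mulVec_vecCons hM, hsq, mulVec_smul, dotProduct_smul, smul_dotProduct,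
        smul_eq_mul, smul_eq_mul]
      ring
    exact pos_of_mul_pos_right (hvalue ▸ mul_pos h₀ (h x hx)) (sq_nonneg _)
  · refine pos_of_mul_pos_right (a := M 0 0) ?_ h₀.le
    rw [← cons_head_tail x] at hx ⊢
    rw [mul_dotProduct_mulVec_vecCons hM]
    by_cases hy : vecTail x = 0
    · have hhead : vecHead x ≠ 0 := by simpa [hy] using hx
      simp only [hy, dotProduct_zero, add_zero, zero_dotProduct]
      positivity
    · exact add_pos_of_nonneg_of_pos (sq_nonneg _) (h _ hy)

end PosDef

section Hermite

open Matrix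

theorem exists_four_mul_mul_add_sq_le_sq {a : ℤ} (ha : a ≠ 0) (b : ℤ) :
    ∃ t : ℤ, 4 * (a * t + b) ^ 2 ≤ a ^ 2 := by
  refine ⟨-round ((b : ℚ) / a), ?_⟩
  have ha' : (a : ℚ) ≠ 0 := mod_cast ha
  have hround : |(a : ℚ) * (b / a - round ((b : ℚ) / a))| ≤ |(a : ℚ) * (1 / 2)| := by
    rw [abs_mul, abs_mul, abs_of_pos (one_half_pos (α := ℚ))]
    gcongr
    exact abs_sub_round _
  rw [← sq_le_sq, mul_sub, mul_div_cancel₀ _ ha'] at hround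
  qify
  linarith

theorem transpose_mul_mul_apply {ι R : Type*} [Fintype ι] [CommRing R] (M U : Matrix ι ι R)
    (i j : ι) : (Uᵀ * M * U) i j = U.col i ⬝ᵥ M *ᵥ U.col j := by
  rw [mul_assoc]
  rfl

theorem det_transpose_mul_mul {ι : Type*} [Fintype ι] [DecidableEq ι] (M : Matrix ι ι ℤ)
    {U : Matrix ι ι ℤ} (hU : IsUnit U.det) : (Uᵀ * M * U).det = M.det := by
  rw [det_mul, det_mul, det_transpose, mul_right_comm, Int.isUnit_mul_self hU, one_mul]

variable {n : ℕ} {M : Matrix (Fin (n + 1)) (Fin (n + 1)) ℤ}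

/-- The upper left entry of `M` is minimal among the values that the quadratic form of `M` takes
on vectors belonging to a basis of the lattice, these vectors being encoded as the columns of
matrices with unit determinant. -/
def HasMinimalCorner (M : Matrix (Fin (n + 1)) (Fin (n + 1)) ℤ) : Prop :=
  ∀ V : Matrix (Fin (n + 1)) (Fin (n + 1)) ℤ, IsUnit V.det → ∀ i, M 0 0 ≤ (Vᵀ * M * V) i i

theorem exists_hasMinimalCorner (hM : M.PosDef) :
    ∃ U : Matrix (Fin (n + 1)) (Fin (n + 1)) ℤ, IsUnit U.det ∧ HasMinimalCorner (Uᵀ * M * U) := by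
  let S := {U : Matrix (Fin (n + 1)) (Fin (n + 1)) ℤ | IsUnit U.det}
  have hS : S.Nonempty := ⟨1, by simp [S]⟩
  let corner (U : Matrix (Fin (n + 1)) (Fin (n + 1)) ℤ) : ℕ := ((Uᵀ * M * U) 0 0).toNat
  let U := Function.argminOn corner S hS
  have hU : IsUnit U.det := Function.argminOn_mem corner S hS
  refine ⟨U, hU, fun V hV i ↦ ?_⟩
  let W := (U * V).submatrix id (Equiv.swap 0 i)
  have hW : IsUnit W.det := by
    rw [det_permute', det_mul]
    exact ((Units.isUnit _).map (Int.castRingHom ℤ)).mul (hU.mul hV)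
  have hcol : W.col 0 = (U * V).col i := by
    ext j
    simp [W, col]
  have hcorner : (Wᵀ * M * W) 0 0 = (Vᵀ * (Uᵀ * M * U) * V) i i := by
    have hUV : Vᵀ * (Uᵀ * M * U) * V = (U * V)ᵀ * M * (U * V) := by
      simp only [transpose_mul, mul_assoc]
    rw [hUV, transpose_mul_mul_apply, transpose_mul_mul_apply, hcol]
  have hpos : 0 < (Wᵀ * M * W) 0 0 := (posDef_transpose_mul_mul hM hW).diag_pos
  have hle : corner U ≤ corner W := Function.argminOn_le corner S hW
  rw [← hcorner]
  exact (Int.toNat_le.1 hle).trans_eq (Int.toNat_of_nonneg hpos.le)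

theorem three_mul_sq_le_four_mul_of_hasMinimalCorner (hM : M.PosDef) (hmin : HasMinimalCorner M)
    {V : Matrix (Fin n) (Fin n) ℤ} (hV : IsUnit V.det) (i : Fin n) :
    3 * M 0 0 ^ 2 ≤ 4 * (Vᵀ * condensation M * V) i i := by
  have hpos : 0 < M 0 0 := hM.diag_pos
  obtain ⟨t, ht⟩ :=
    exists_four_mul_mul_add_sq_le_sq hpos.ne' ((fun j ↦ M 0 j.succ) ⬝ᵥ V.col i)
  let W := blockUpper 1 (fun _ ↦ t) V
  have hW : IsUnit W.det := by rwa [det_blockUpper, one_mul]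
  have hcol : W.col i.succ = vecCons t (V.col i) := by
    ext j
    cases j using Fin.cases <;> rfl
  have hle : M 0 0 ≤ vecCons t (V.col i) ⬝ᵥ M *ᵥ vecCons t (V.col i) := by
    simpa only [transpose_mul_mul_apply, hcol] using hmin W hW i.succ
  have hsq := mul_le_mul_of_nonneg_left hle hpos.le
  rw [mul_dotProduct_mulVec_vecCons (isHermitian_iff_isSymm.mp hM.isHermitian),
    ← transpose_mul_mul_apply] at hsq
  linarith

/-- Hermite's inequality `M(x) ^ k ≤ (4 / 3) ^ (k * (k - 1) / 2) * det M` for forms in `k = n + 1`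
variables, cleared of denominators. -/
theorem exists_three_pow_mul_pow_le_four_pow_mul_det (hM : M.PosDef) :
    ∃ U : Matrix (Fin (n + 1)) (Fin (n + 1)) ℤ, IsUnit U.det ∧
      3 ^ (n + 1).choose 2 * (Uᵀ * M * U) 0 0 ^ (n + 1) ≤ 4 ^ (n + 1).choose 2 * M.det := by
  induction n with
  | zero => exact ⟨1, by simp, by simp⟩
  | succ n ih =>
    obtain ⟨U, hU, hmin⟩ := exists_hasMinimalCorner hM
    refine ⟨U, hU, ?_⟩
    rw [← det_transpose_mul_mul M hU]
    have hN := posDef_transpose_mul_mul hM hU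
    set N := Uᵀ * M * U
    have hpos : 0 < N 0 0 := hN.diag_pos
    have hN_symm : N.IsSymm := isHermitian_iff_isSymm.mp hN.isHermitian
    obtain ⟨V, hV, hle⟩ := ih ((posDef_iff_posDef_condensation hN_symm).mp hN).2
    rw [det_condensation hpos.ne'] at hle
    have hcorner := three_mul_sq_le_four_mul_of_hasMinimalCorner hN hmin hV 0
    set b := (Vᵀ * condensation N * V) 0 0
    rw [Nat.choose_succ_succ', Nat.choose_one_right]
    refine le_of_mul_le_mul_left ?_ (pow_pos hpos n)
    calc N 0 0 ^ n * (3 ^ (n + 1 + (n + 1).choose 2) * N 0 0 ^ (n + 1 + 1))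
        = 3 ^ (n + 1).choose 2 * (3 * N 0 0 ^ 2) ^ (n + 1) := by ring
      _ ≤ 3 ^ (n + 1).choose 2 * (4 * b) ^ (n + 1) := by gcongr
      _ = 4 ^ (n + 1) * (3 ^ (n + 1).choose 2 * b ^ (n + 1)) := by ring
      _ ≤ 4 ^ (n + 1) * (4 ^ (n + 1).choose 2 * (N 0 0 ^ n * N.det)) := by gcongr
      _ = N 0 0 ^ n * (4 ^ (n + 1 + (n + 1).choose 2) * N.det) := by ring

theorem exists_transpose_mul_mul_corner_eq_one (hn : n ≤ 4) (hM : M.PosDef) (hdet : M.det = 1) :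
    ∃ U : Matrix (Fin (n + 1)) (Fin (n + 1)) ℤ, IsUnit U.det ∧ (Uᵀ * M * U) 0 0 = 1 := by
  obtain ⟨U, hU, hle⟩ := exists_three_pow_mul_pow_le_four_pow_mul_det hM
  refine ⟨U, hU, ?_⟩
  have hpos : 0 < (Uᵀ * M * U) 0 0 := (posDef_transpose_mul_mul hM hU).diag_pos
  by_contra hne
  have htwo : 2 ≤ (Uᵀ * M * U) 0 0 := by lia
  have hnumeric : (3 ^ (n + 1).choose 2 * 2 ^ (n + 1) : ℤ) ≤ 4 ^ (n + 1).choose 2 :=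
    calc (3 ^ (n + 1).choose 2 * 2 ^ (n + 1) : ℤ)
        ≤ 3 ^ (n + 1).choose 2 * (Uᵀ * M * U) 0 0 ^ (n + 1) := by gcongr
      _ ≤ 4 ^ (n + 1).choose 2 := by simpa only [hdet, mul_one] using hle
  interval_cases n <;> norm_num [Nat.choose] at hnumeric

end Hermite

section ThreeSquares

open Matrix NumberTheorySymbols

theorem exists_eq_transpose_mul_self_of_posDef_of_det_eq_one {n : ℕ} (hn : n ≤ 5)
    {M : Matrix (Fin n) (Fin n) ℤ} (hM : M.PosDef) (hdet : M.det = 1) :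
    ∃ V : Matrix (Fin n) (Fin n) ℤ, M = Vᵀ * V := by
  induction n with
  | zero => exact ⟨0, Subsingleton.elim _ _⟩
  | succ n ih =>
    obtain ⟨U, hU, hcorner⟩ := exists_transpose_mul_mul_corner_eq_one (by lia) hM hdet
    have hM_eq : M = (U⁻¹)ᵀ * (Uᵀ * M * U) * U⁻¹ :=
      calc M = (U * U⁻¹)ᵀ * M * (U * U⁻¹) := by simp [mul_nonsing_inv U hU]
        _ = (U⁻¹)ᵀ * (Uᵀ * M * U) * U⁻¹ := by simp only [transpose_mul, mul_assoc]
    have hN := posDef_transpose_mul_mul hM hU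
    have hN_det := (det_transpose_mul_mul M hU).trans hdet
    set N := Uᵀ * M * U
    have hN_symm : N.IsSymm := isHermitian_iff_isSymm.mp hN.isHermitian
    have hC_det : (condensation N).det = 1 := by
      simpa [hcorner, hN_det] using (pow_mul_det_eq_mul_det_condensation N).symm
    obtain ⟨V, hV⟩ := ih (by lia) ((posDef_iff_posDef_condensation hN_symm).mp hN).2 hC_det
    let W := blockUpper 1 (fun j ↦ N 0 j.succ) V
    have hW : N = Wᵀ * W := eq_blockUpper_transpose_mul_self hN_symm hcorner hV
    refine ⟨W * U⁻¹, ?_⟩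
    rw [hM_eq, hW]
    simp only [transpose_mul, mul_assoc]

theorem exists_sq_add_sq_add_sq_eq_of_dvd {m d x : ℤ} (hd : 0 < d) (hdm : 1 < d * m)
    (h : d * m - 1 ∣ x ^ 2 + d) : ∃ u v w : ℤ, u ^ 2 + v ^ 2 + w ^ 2 = m := by
  obtain ⟨a, ha⟩ := h
  have ha_pos : 0 < a := pos_of_mul_pos_right (a := d * m - 1) (ha ▸ by positivity) (by lia)
  let M : Matrix (Fin 3) (Fin 3) ℤ := !![a, x, 1; x, d * m - 1, 0; 1, 0, m]
  have hM_symm : M.IsSymm := .ext fun i j ↦ by fin_cases i <;> fin_cases j <;> rfl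
  have hM_det : M.det = 1 := by
    have hdet : M.det = a * (d * m - 1) * m - x * x * m - (d * m - 1) := by
      simp [M, det_fin_three]
    linear_combination hdet - m * ha
  have hd_eq : a * (d * m - 1) - x * x = d := by linear_combination -ha
  have hC : condensation M = !![d, -x; -x, a * m - 1] := by
    ext i j
    fin_cases i <;> fin_cases j <;> simp [M, condensation_apply, hd_eq]
  have ha_eq : d * (a * m - 1) - x * x = a := by linear_combination -ha
  have hCC : condensation !![d, -x; -x, a * m - 1] = diagonal fun _ ↦ a := by
    ext i j
    fin_cases i
    fin_cases j
    simp [condensation_apply, ha_eq]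
  have hM : M.PosDef := by
    rw [posDef_iff_posDef_condensation hM_symm,
      posDef_iff_posDef_condensation (isSymm_condensation hM_symm), hC, hCC]
    exact ⟨ha_pos, hd, .diagonal fun _ ↦ ha_pos⟩
  obtain ⟨V, hV⟩ := exists_eq_transpose_mul_self_of_posDef_of_det_eq_one (by norm_num) hM hM_det
  have hm : m = (Vᵀ * V) 2 2 := congrFun₂ hV 2 2
  refine ⟨V 0 2, V 1 2, V 2 2, ?_⟩
  rw [hm, mul_apply, Fin.sum_univ_three]
  simp only [transpose_apply, sq]

theorem exists_prime_two_mul_add_one_eq_mul {m : ℕ} (hm : m % 8 = 3) :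
    ∃ p d : ℕ, p.Prime ∧ p % 4 = 1 ∧ d % 8 = 1 ∧ 2 * p + 1 = d * m := by
  obtain ⟨k, rfl⟩ : ∃ k, m = 8 * k + 3 := ⟨m / 8, by lia⟩
  have hcoprime : (4 * k + 1).Coprime (4 * (8 * k + 3)) := by
    refine .mul_right (by simp) ?_
    rw [show 8 * k + 3 = 1 + (4 * k + 1) * 2 by ring, Nat.coprime_add_mul_left_right]
    exact Nat.coprime_one_right _
  obtain ⟨p, hlt, hp, hmod⟩ :=
    Nat.forall_exists_prime_gt_and_modEq (4 * k + 1) (by lia) hcoprime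
  obtain ⟨j, hj⟩ := (Nat.modEq_iff_dvd' hlt.le).mp hmod.symm
  obtain rfl : p = 4 * (k + (8 * k + 3) * j) + 1 := by
    rw [mul_assoc] at hj
    lia
  exact ⟨_, 8 * j + 1, hp, by lia, by lia, by ring⟩

theorem jacobiSym_neg_eq_jacobiSym_neg_two {p d : ℕ} (hp : p % 4 = 1) (hd : Odd d)
    (h : d ∣ 2 * p + 1) : J(-d | p) = J(-2 | d) := by
  have hp_odd : Odd p := Nat.odd_iff.mpr (by lia)
  have htwo : Int.gcd 2 d = 1 := Nat.coprime_two_left.mpr hd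
  have hmod : (2 ^ 2 * p : ℤ) ≡ -2 [ZMOD d] := by
    refine (Int.modEq_iff_dvd.mpr ?_).symm
    have hdvd : (d : ℤ) ∣ 2 * p + 1 := mod_cast h
    simpa [mul_add, ← mul_assoc] using hdvd.mul_left 2
  calc J(-d | p) = J(d | p) := by
        rw [jacobiSym.neg _ hp_odd, ZMod.χ₄_nat_one_mod_four hp, one_mul]
    _ = J(p | d) := jacobiSym.quadratic_reciprocity_one_mod_four' hd hp
    _ = J(2 ^ 2 * p | d) := by rw [jacobiSym.mul_left, jacobiSym.sq_one' htwo, one_mul]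
    _ = J(-2 | d) := jacobiSym.mod_left' hmod

theorem exists_two_mul_dvd_sq_add {p : ℕ} [Fact p.Prime] (hp : Odd p) {d : ℤ}
    (h : J(-d | p) = 1) : ∃ x : ℤ, 2 * (p : ℤ) ∣ x ^ 2 + d := by
  obtain ⟨g, hg⟩ := ZMod.isSquare_of_jacobiSym_eq_one h
  obtain ⟨y, rfl⟩ := ZMod.intCast_surjective g
  have hp_int : Odd (p : ℤ) := mod_cast hp
  have hy : (p : ℤ) ∣ y ^ 2 + d := by
    rw [← ZMod.intCast_zmod_eq_zero_iff_dvd]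
    push_cast at hg ⊢
    rw [sq, ← hg, neg_add_cancel]
  obtain ⟨x, hxp, hx⟩ : ∃ x : ℤ, (p : ℤ) ∣ x ^ 2 + d ∧ Even (x ^ 2 + d) := by
    rcases Int.even_or_odd (y ^ 2 + d) with heven | hodd
    · exact ⟨y, hy, heven⟩
    · have hshift : (y + p) ^ 2 + d = (y ^ 2 + d) + p * (2 * y + p) := by ring
      refine ⟨y + p, ?_, ?_⟩ <;> rw [hshift]
      · exact hy.add (dvd_mul_right _ _)
      · exact hodd.add_odd (hp_int.mul ((even_two_mul y).add_odd hp_int))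
  exact ⟨x, (Int.isCoprime_two_left.mpr hp_int).mul_dvd hx.two_dvd hxp⟩

theorem exists_sq_add_sq_add_sq_eq_of_mod_eight_eq_three {m : ℕ} (hm : m % 8 = 3) :
    ∃ u v w : ℤ, u ^ 2 + v ^ 2 + w ^ 2 = m := by
  obtain ⟨p, d, hp, hp_mod, hd_mod, hpd⟩ := exists_prime_two_mul_add_one_eq_mul hm
  have : Fact p.Prime := ⟨hp⟩
  have hd : Odd d := Nat.odd_iff.mpr (by lia)
  have hneg_two : J(-2 | d) = 1 := by
    rw [jacobiSym.at_neg_two hd, ZMod.χ₈'_nat_eq_if_mod_eight]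
    simp [hd_mod, Nat.odd_iff.mp hd]
  have hneg : J(-d | p) = 1 :=
    (jacobiSym_neg_eq_jacobiSym_neg_two hp_mod hd (hpd ▸ dvd_mul_right d m)).trans hneg_two
  obtain ⟨x, hx⟩ := exists_two_mul_dvd_sq_add (Nat.odd_iff.mpr (by lia)) hneg
  have hdm : (d * m : ℤ) = 2 * p + 1 := mod_cast hpd.symm
  have hp_pos : (0 : ℤ) < p := mod_cast hp.pos
  refine exists_sq_add_sq_add_sq_eq_of_dvd (d := d) (x := x) (mod_cast hd.pos) ?_ ?_
  · linarith [hp_pos]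
  · rwa [hdm, add_sub_cancel_right]

end ThreeSquares

section Triangular

theorem odd_and_odd_and_odd_of_sq_add_sq_add_sq {u v w : ℤ}
    (h : (u ^ 2 + v ^ 2 + w ^ 2) % 4 = 3) : Odd u ∧ Odd v ∧ Odd w := by
  have sq_mod_four (x : ℤ) : x ^ 2 % 4 = x % 2 := by
    rcases Int.even_or_odd x with ⟨k, rfl⟩ | hx
    · rw [show (k + k) ^ 2 = 4 * k ^ 2 by ring]
      lia
    · rw [Int.sq_mod_four_eq_one_of_odd hx, Int.odd_iff.mp hx]
  have hu := sq_mod_four u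
  have hv := sq_mod_four v
  have hw := sq_mod_four w
  simp only [Int.odd_iff]
  omega

theorem exists_sq_eq_eight_mul_triangular_add_one {u : ℤ} (hu : Odd u) :
    ∃ a : ℕ, u ^ 2 = 8 * ((a * (a + 1) / 2 : ℕ) : ℤ) + 1 := by
  obtain ⟨a, ha⟩ : Odd u.natAbs := Int.natAbs_odd.mpr hu
  refine ⟨a, ?_⟩
  have hdiv := Nat.div_two_mul_two_of_even (Nat.even_mul_succ_self a)
  rw [← Int.natAbs_sq, ha]
  zify at hdiv
  push_cast
  linear_combination -4 * hdiv

end Triangular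

theorem gauss_three_triangular (n : ℕ) :
    ∃ a b c : ℕ, a * (a + 1) / 2 + b * (b + 1) / 2 + c * (c + 1) / 2 = n := by
  obtain ⟨u, v, w, h⟩ :=
    exists_sq_add_sq_add_sq_eq_of_mod_eight_eq_three (m := 8 * n + 3) (by lia)
  obtain ⟨hu, hv, hw⟩ : Odd u ∧ Odd v ∧ Odd w :=
    odd_and_odd_and_odd_of_sq_add_sq_add_sq (by lia)
  obtain ⟨a, ha⟩ := exists_sq_eq_eight_mul_triangular_add_one hu
  obtain ⟨b, hb⟩ := exists_sq_eq_eight_mul_triangular_add_one hv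
  obtain ⟨c, hc⟩ := exists_sq_eq_eight_mul_triangular_add_one hw
  exact ⟨a, b, c, by lia⟩
end

section
/- For all n ≥ 0, P^3_3(27n + 12) = 3 · P^3_3(3n + 1), where P^3_3(m) is the number of partitions of m into three triangular numbers (Hirschhorn–Sellers identity cited in the paper). -/
/-- The k-th triangular number. -/
def tri (k : ℕ) : ℕ := k * (k + 1) / 2

/-- Number of partitions of m into three triangular numbers (unordered,
counted via normalized triples a ≥ b ≥ c ≥ 0). -/
noncomputable def P33 (m : ℕ) : ℕ :=
  Set.ncard {x : ℕ × ℕ × ℕ | x.2.1 ≤ x.1 ∧ x.2.2 ≤ x.2.1 ∧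
    tri x.1 + tri x.2.1 + tri x.2.2 = m}

/-!
By `8 * tri k + 1 = (2 * k + 1) ^ 2`, `P33 m` counts the representations of `8 * m + 3` as a sum of
three positive odd squares, so with `N = 24 * n + 11` the claim is that `9 * N` has three times as
many such representations as `N`. Since squares are `0` or `1` modulo `3`, a representation of
`9 * N` consists either of multiples of `3`, and is then `3` times a representation of `N`, or of
numbers prime to `3`, whose signs can be chosen in exactly one way to make them all `1` modulo `3`.
The reflection in the plane orthogonal to `(1, 1, 1)`, scaled by `-3`, maps the odd solutions of
`x ^ 2 + y ^ 2 + z ^ 2 = N`, of any signs but with `x + y + z` congruent to `2` modulo `3`,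
bijectively onto the latter. As `N` is `2` modulo `3`, exactly one of `x, y, z` is a multiple of
`3`; the congruence fixes the signs of the other two and leaves this one free, so each
representation of `N` is met twice.
-/

open Set

section Reps

variable {α β R : Type*}

/-- The representations of `N` as an unordered sum of `k` values of `w` at arguments in `P`,
repetitions allowed. -/
def reps [AddCommMonoid R] (w : α → R) (P : Set α) (k : ℕ) (N : R) : Set (Multiset α) :=
  {s | s.card = k ∧ (∀ x ∈ s, x ∈ P) ∧ (s.map w).sum = N}

theorem bijOn_multisetMap [Nonempty α] {f : α → β} {P : Set α} {Q : Set β} (hf : BijOn f P Q) :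
    BijOn (Multiset.map f) {s | ∀ x ∈ s, x ∈ P} {t | ∀ y ∈ t, y ∈ Q} := by
  obtain ⟨hleft, hright⟩ := hf.invOn_invFunOn
  refine InvOn.bijOn (f' := Multiset.map (Function.invFunOn f P)) ⟨fun s hs ↦ ?_, fun t ht ↦ ?_⟩
    (fun s hs ↦ ?_) (fun t ht ↦ ?_)
  · simpa using Multiset.map_congr rfl fun x hx ↦ hleft (hs x hx)
  · simpa using Multiset.map_congr rfl fun y hy ↦ hright (ht y hy)
  · exact Multiset.forall_mem_map_iff.2 fun x hx ↦ hf.mapsTo (hs x hx)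
  · exact Multiset.forall_mem_map_iff.2 fun y hy ↦ hf.surjOn.mapsTo_invFunOn (ht y hy)

theorem encard_reps_of_bijOn [Nonempty α] [Ring R] [NoZeroDivisors R] {f : α → β} {P : Set α}
    {Q : Set β} {w : α → R} {v : β → R} {c d : R} (hf : BijOn f P Q) (hc : c ≠ 0)
    (hv : ∀ x ∈ P, v (f x) = c * w x + d) (k : ℕ) (N : R) :
    (reps v Q k (c * N + k * d)).encard = (reps w P k N).encard := by
  have hmap := bijOn_multisetMap hf
  have sum_map : ∀ s : Multiset α, (∀ x ∈ s, x ∈ P) →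
      ((s.map f).map v).sum = c * (s.map w).sum + s.card * d := fun s hs ↦ by
    have hcongr : (s.map f).map v = s.map fun x ↦ c * w x + d := by
      rw [Multiset.map_map]
      exact Multiset.map_congr rfl fun x hx ↦ hv x (hs x hx)
    rw [hcongr, Multiset.sum_map_add, Multiset.sum_map_mul_left, Multiset.map_const',
      Multiset.sum_replicate, nsmul_eq_mul]
  have himage : reps v Q k (c * N + k * d) = Multiset.map f '' reps w P k N := by
    apply Subset.antisymm
    · rintro t ⟨hcard, hQ, hsum⟩
      obtain ⟨s, hs, rfl⟩ := hmap.surjOn hQ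
      rw [Multiset.card_map] at hcard
      rw [sum_map s hs, hcard] at hsum
      exact ⟨s, ⟨hcard, hs, mul_left_cancel₀ hc (add_right_cancel hsum)⟩, rfl⟩
    · rintro _ ⟨s, ⟨hcard, hs, hsum⟩, rfl⟩
      exact ⟨by rwa [Multiset.card_map], hmap.mapsTo hs, by rw [sum_map s hs, hsum, hcard]⟩
  rw [himage, (hmap.injOn.mono fun s hs ↦ hs.2.1).encard_image]

theorem disjoint_reps [AddCommMonoid R] {w : α → R} {P Q : Set α} (hPQ : Disjoint P Q) {k : ℕ}
    (hk : k ≠ 0) (N : R) : Disjoint (reps w P k N) (reps w Q k N) := by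
  refine disjoint_left.2 ?_
  rintro s ⟨hcard, hP, -⟩ ⟨-, hQ, -⟩
  obtain ⟨x, hx⟩ := Multiset.card_pos_iff_exists_mem.1 (hcard ▸ Nat.pos_of_ne_zero hk)
  exact disjoint_left.1 hPQ (hP x hx) (hQ x hx)

end Reps

theorem P33_eq_ncard_reps (m : ℕ) : P33 m = (reps tri univ 3 m).ncard := by
  have himage : reps tri univ 3 m = (fun x : ℕ × ℕ × ℕ ↦ (↑[x.1, x.2.1, x.2.2] : Multiset ℕ)) ''
      {x | x.2.1 ≤ x.1 ∧ x.2.2 ≤ x.2.1 ∧ tri x.1 + tri x.2.1 + tri x.2.2 = m} := by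
    apply Subset.antisymm
    · rintro s ⟨hcard, -, hsum⟩
      obtain ⟨a, b, c, hs⟩ :=
        List.length_eq_three.1 ((s.length_sort (r := (· ≥ ·))).trans hcard)
      have hsorted := hs ▸ s.pairwise_sort (· ≥ ·)
      obtain rfl := hs ▸ s.sort_eq (· ≥ ·)
      simp only [List.pairwise_cons, List.mem_cons, List.not_mem_nil, or_false, forall_eq_or_imp,
        forall_eq] at hsorted
      simp only [Multiset.map_coe, Multiset.sum_coe, List.map_cons, List.map_nil, List.sum_cons,
        List.sum_nil] at hsum
      exact ⟨(a, b, c), ⟨hsorted.1.1, hsorted.2.1, by lia⟩, rfl⟩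
    · rintro _ ⟨x, ⟨-, -, hsum⟩, rfl⟩
      exact ⟨rfl, fun _ _ ↦ mem_univ _, by simp [← hsum, add_assoc]⟩
  rw [himage, InjOn.ncard_image, P33]
  rintro ⟨a, b, c⟩ ⟨hab, hbc, -⟩ ⟨a', b', c'⟩ ⟨hab', hbc', -⟩ h
  have := (Multiset.coe_eq_coe.1 h).eq_of_pairwise' (r := (· ≥ ·)) (by grind) (by grind)
  simpa using this

theorem eight_mul_tri_add_one (k : ℕ) : 8 * (tri k : ℤ) + 1 = (2 * k + 1) ^ 2 := by
  have h : 2 * tri k = k * (k + 1) := Nat.mul_div_cancel' (Nat.even_mul_succ_self k).two_dvd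
  zify at h
  linear_combination 4 * h

/-- The representations of `N` as an unordered sum of three squares of elements of `P`. -/
abbrev threeSquareReps (P : Set ℤ) (N : ℤ) : Set (Multiset ℤ) := reps (· ^ 2) P 3 N

/-- The positive odd integers. -/
def posOdd : Set ℤ := {x | Odd x ∧ 0 < x}

theorem bijOn_two_mul_add_one : BijOn (fun k : ℕ ↦ 2 * (k : ℤ) + 1) univ posOdd := by
  refine ⟨fun k _ ↦ ⟨⟨k, rfl⟩, by positivity⟩, fun a _ b _ h ↦ by grind, ?_⟩
  rintro _ ⟨⟨k, rfl⟩, hpos⟩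
  lift k to ℕ using by lia
  exact ⟨k, mem_univ k, rfl⟩

theorem P33_eq_ncard_threeSquareReps (m : ℕ) :
    P33 m = (threeSquareReps posOdd (8 * m + 3)).ncard := by
  have hcast : reps tri univ 3 m = reps (fun k ↦ (tri k : ℤ)) univ 3 (m : ℤ) := by
    ext s
    simp only [reps, mem_ofPred_eq, ← Nat.cast_inj (R := ℤ), Nat.cast_multiset_sum,
      Multiset.map_map, Function.comp_def]
  have h := encard_reps_of_bijOn (w := fun k ↦ (tri k : ℤ)) (v := (· ^ 2)) bijOn_two_mul_add_one
    (by norm_num : (8 : ℤ) ≠ 0) (fun k _ ↦ (eight_mul_tri_add_one k).symm) 3 m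
  rw [P33_eq_ncard_reps, hcast, ncard_def, ncard_def, ← h]
  norm_num

section Reflection

variable {R : Type*} [CommRing R]

/-- Up to the factor `-s.card`, the reflection of the vector `s` in the hyperplane orthogonal to
`(1, …, 1)`; the factor clears denominators and makes sense for unordered vectors. -/
def scaledReflection (s : Multiset R) : Multiset R := s.map fun x ↦ 2 * s.sum - s.card * x

@[simp]
theorem card_scaledReflection (s : Multiset R) : (scaledReflection s).card = s.card :=
  Multiset.card_map _ _

theorem multiset_sum_map_mul (c : R) (s : Multiset R) : (s.map (c * ·)).sum = c * s.sum := by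
  rw [Multiset.sum_map_mul_left, Multiset.map_id']

theorem sum_scaledReflection (s : Multiset R) : (scaledReflection s).sum = s.card * s.sum := by
  rw [scaledReflection, Multiset.sum_map_sub, multiset_sum_map_mul, Multiset.map_const',
    Multiset.sum_replicate, nsmul_eq_mul]
  ring

theorem sum_sq_scaledReflection (s : Multiset R) :
    ((scaledReflection s).map (· ^ 2)).sum = (s.card : R) ^ 2 * (s.map (· ^ 2)).sum := by
  have hexpand (x : R) : (2 * s.sum - s.card * x) ^ 2 =
      4 * s.sum ^ 2 - 4 * s.sum * s.card * x + (s.card : R) ^ 2 * x ^ 2 := by ring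
  simp only [scaledReflection, Multiset.map_map, Function.comp_def, hexpand, Multiset.sum_map_add,
    Multiset.sum_map_sub, multiset_sum_map_mul, Multiset.sum_map_mul_left, Multiset.map_const',
    Multiset.sum_replicate, nsmul_eq_mul]
  ring

theorem scaledReflection_scaledReflection (s : Multiset R) :
    scaledReflection (scaledReflection s) = s.map ((s.card : R) ^ 2 * ·) := by
  rw [scaledReflection, sum_scaledReflection, card_scaledReflection, scaledReflection,
    Multiset.map_map]
  refine Multiset.map_congr rfl fun x _ ↦ ?_
  simp only [Function.comp_apply]
  ring

theorem scaledReflection_map_mul (c : R) (s : Multiset R) :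
    scaledReflection (s.map (c * ·)) = (scaledReflection s).map (c * ·) := by
  simp only [scaledReflection, Multiset.map_map, multiset_sum_map_mul, Multiset.card_map]
  refine Multiset.map_congr rfl fun x _ ↦ ?_
  simp only [Function.comp_apply]
  ring

theorem scaledReflection_injective [IsDomain R] [CharZero R] :
    Function.Injective (scaledReflection : Multiset R → Multiset R) := by
  intro s t h
  have hcard : s.card = t.card := by simpa using congrArg Multiset.card h
  rcases eq_or_ne t.card 0 with h0 | h0
  · rw [Multiset.card_eq_zero.1 h0, Multiset.card_eq_zero.1 (hcard.trans h0)]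
  · have h2 := congrArg scaledReflection h
    rw [scaledReflection_scaledReflection, scaledReflection_scaledReflection, hcard] at h2
    exact Multiset.map_injective (mul_right_injective₀ (by positivity)) h2

end Reflection

/-- Odd integers with the sign normalized: an element prime to `3` is `1` modulo `3`, a multiple of
`3` has the sign of `ε`. -/
def normalizedOdd (ε : ℤ) : Set ℤ := {x | Odd x ∧ (x % 3 = 1 ∨ x % 3 = 0 ∧ 0 < ε * x)}

/-- The odd integers congruent to `1` modulo `3`. -/
def oddOneModThree : Set ℤ := {x | Odd x ∧ x % 3 = 1}

/-- The positive odd multiples of `3`. -/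
def posOddMulThree : Set ℤ := {x | Odd x ∧ x % 3 = 0 ∧ 0 < x}

theorem bijOn_abs_normalizedOdd {ε : ℤ} (hε : ε ≠ 0) :
    BijOn (fun x : ℤ ↦ |x|) (normalizedOdd ε) posOdd := by
  refine ⟨?_, ?_, ?_⟩
  · rintro x ⟨hodd, -⟩
    exact ⟨odd_abs.2 hodd, abs_pos.2 (by grind)⟩
  · rintro x ⟨-, hx⟩ y ⟨-, hy⟩ hxy
    rcases abs_eq_abs.1 hxy with rfl | rfl
    · rfl
    · grind
  · rintro x ⟨hodd, hpos⟩
    by_cases hx : x ∈ normalizedOdd ε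
    · exact ⟨x, hx, abs_of_pos hpos⟩
    · refine ⟨-x, ⟨hodd.neg, ?_⟩, by simpa using hpos.le⟩
      have hx' : ¬(x % 3 = 1 ∨ x % 3 = 0 ∧ 0 < ε * x) := fun h ↦ hx ⟨hodd, h⟩
      have : ε * x ≠ 0 := by positivity
      lia

theorem bijOn_three_mul_posOdd : BijOn (3 * · : ℤ → ℤ) posOdd posOddMulThree := by
  refine ⟨?_, (mul_right_injective₀ three_ne_zero).injOn, ?_⟩
  · rintro x ⟨hodd, hpos⟩
    exact ⟨by grind, by lia, by lia⟩
  · rintro x ⟨hodd, hmod, hpos⟩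
    exact ⟨x / 3, ⟨by grind, by lia⟩, by lia⟩

theorem encard_threeSquareReps_normalizedOdd {ε : ℤ} (hε : ε ≠ 0) (N : ℤ) :
    (threeSquareReps (normalizedOdd ε) N).encard = (threeSquareReps posOdd N).encard := by
  simpa using (encard_reps_of_bijOn (c := 1) (d := 0) (w := fun x : ℤ ↦ x ^ 2) (v := (· ^ 2))
    (bijOn_abs_normalizedOdd hε) one_ne_zero (by simp) 3 N).symm

theorem encard_threeSquareReps_posOddMulThree (N : ℤ) :
    (threeSquareReps posOddMulThree (9 * N)).encard = (threeSquareReps posOdd N).encard := by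
  simpa using encard_reps_of_bijOn (c := 9) (d := 0) (w := fun x : ℤ ↦ x ^ 2) (v := (· ^ 2))
    bijOn_three_mul_posOdd (by norm_num) (fun x _ ↦ by ring) 3 N

theorem disjoint_posOddMulThree_oddOneModThree : Disjoint posOddMulThree oddOneModThree :=
  disjoint_left.2 fun x hx hx' ↦ by have := hx.2.1; have := hx'.2; lia

theorem emod_three_cases (x : ℤ) :
    x % 3 = 0 ∧ x ^ 2 % 3 = 0 ∨ x % 3 = 1 ∧ x ^ 2 % 3 = 1 ∨ x % 3 = 2 ∧ x ^ 2 % 3 = 1 := by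
  rcases (by lia : x % 3 = 0 ∨ x % 3 = 1 ∨ x % 3 = 2) with h | h | h <;>
    simp [h, pow_two, Int.mul_emod]

theorem forall_emod_three_eq_zero_or_forall_ne {s : Multiset ℤ} (hcard : s.card = 3)
    (hs : (s.map (· ^ 2)).sum % 3 = 0) : (∀ x ∈ s, x % 3 = 0) ∨ ∀ x ∈ s, x % 3 ≠ 0 := by
  obtain ⟨x, y, z, rfl⟩ := Multiset.card_eq_three.1 hcard
  simp only [Multiset.insert_eq_cons, Multiset.map_cons, Multiset.map_singleton,
    Multiset.sum_cons, Multiset.sum_singleton, Multiset.mem_cons, Multiset.mem_singleton,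
    forall_eq_or_imp, forall_eq] at hs ⊢
  have := emod_three_cases x
  have := emod_three_cases y
  have := emod_three_cases z
  lia

theorem exists_eq_triple_emod_three {s : Multiset ℤ} (hcard : s.card = 3)
    (hs : (s.map (· ^ 2)).sum % 3 = 2) :
    ∃ x y z, s = {x, y, z} ∧ x % 3 = 0 ∧ y % 3 ≠ 0 ∧ z % 3 ≠ 0 := by
  obtain ⟨x, y, z, rfl⟩ := Multiset.card_eq_three.1 hcard
  simp only [Multiset.insert_eq_cons, Multiset.map_cons, Multiset.map_singleton,
    Multiset.sum_cons, Multiset.sum_singleton] at hs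
  have hx := emod_three_cases x
  have hy := emod_three_cases y
  have hz := emod_three_cases z
  rcases (by lia : x % 3 = 0 ∧ y % 3 ≠ 0 ∧ z % 3 ≠ 0 ∨ y % 3 = 0 ∧ x % 3 ≠ 0 ∧ z % 3 ≠ 0 ∨
    z % 3 = 0 ∧ x % 3 ≠ 0 ∧ y % 3 ≠ 0) with h | h | h
  · exact ⟨x, y, z, rfl, h⟩
  · exact ⟨y, x, z, Multiset.cons_swap _ _ _, h⟩
  · exact ⟨z, x, y, Multiset.coe_eq_coe.2 (List.perm_append_comm (l₁ := [x, y]) (l₂ := [z])), h⟩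

theorem threeSquareReps_normalizedOdd_eq_union {N : ℤ} (hN : N % 3 = 0) :
    threeSquareReps (normalizedOdd 1) N =
      threeSquareReps posOddMulThree N ∪ threeSquareReps oddOneModThree N := by
  apply Subset.antisymm
  · rintro s ⟨hcard, hs, hsum⟩
    rcases forall_emod_three_eq_zero_or_forall_ne hcard (hsum ▸ hN) with h | h
    · exact .inl ⟨hcard, fun x hx ↦ ⟨(hs x hx).1, h x hx, by have := (hs x hx).2; grind⟩, hsum⟩
    · exact .inr ⟨hcard, fun x hx ↦ ⟨(hs x hx).1, by have := (hs x hx).2; grind⟩, hsum⟩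
  · rintro s (⟨hcard, hs, hsum⟩ | ⟨hcard, hs, hsum⟩)
    · exact ⟨hcard, fun x hx ↦ ⟨(hs x hx).1, .inr (by simpa using (hs x hx).2)⟩, hsum⟩
    · exact ⟨hcard, fun x hx ↦ ⟨(hs x hx).1, .inl (hs x hx).2⟩, hsum⟩

theorem triple_mem_threeSquareReps_normalizedOdd {ε N x y z : ℤ} (hx : x % 3 = 0)
    (hy : y % 3 ≠ 0) (hz : z % 3 ≠ 0) :
    {x, y, z} ∈ threeSquareReps (normalizedOdd ε) N ↔
      {x, y, z} ∈ {s ∈ threeSquareReps {x | Odd x} N | s.sum % 3 = 2} ∧ 0 < ε * x := by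
  have hyz : (x + (y + z)) % 3 = 2 ↔ y % 3 = 1 ∧ z % 3 = 1 := by lia
  simp only [normalizedOdd, reps, mem_ofPred_eq, Multiset.insert_eq_cons, Multiset.mem_cons,
    Multiset.mem_singleton, forall_eq_or_imp, forall_eq, Multiset.sum_cons,
    Multiset.sum_singleton, hx, hy, hz, hyz]
  grind

theorem setOf_sum_emod_three_eq_union {N : ℤ} (hN : N % 3 = 2) :
    {s ∈ threeSquareReps {x | Odd x} N | s.sum % 3 = 2} =
      threeSquareReps (normalizedOdd 1) N ∪ threeSquareReps (normalizedOdd (-1)) N := by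
  apply Subset.antisymm
  · rintro s hs
    obtain ⟨x, y, z, rfl, hx, hy, hz⟩ := exists_eq_triple_emod_three hs.1.1 (hs.1.2.2 ▸ hN)
    have hodd : Odd x := hs.1.2.1 x (by simp)
    rw [mem_union, triple_mem_threeSquareReps_normalizedOdd hx hy hz,
      triple_mem_threeSquareReps_normalizedOdd hx hy hz]
    rcases lt_or_gt_of_ne (by grind : x ≠ 0) with hneg | hpos
    · exact .inr ⟨hs, by lia⟩
    · exact .inl ⟨hs, by lia⟩
  · rintro s (hs | hs) <;>
    · obtain ⟨x, y, z, rfl, hx, hy, hz⟩ := exists_eq_triple_emod_three hs.1 (hs.2.2 ▸ hN)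
      exact ((triple_mem_threeSquareReps_normalizedOdd hx hy hz).1 hs).1

theorem disjoint_threeSquareReps_normalizedOdd {N : ℤ} (hN : N % 3 = 2) :
    Disjoint (threeSquareReps (normalizedOdd 1) N) (threeSquareReps (normalizedOdd (-1)) N) := by
  refine disjoint_left.2 fun s hpos hneg ↦ ?_
  obtain ⟨x, y, z, rfl, hx, hy, hz⟩ := exists_eq_triple_emod_three hpos.1 (hpos.2.2 ▸ hN)
  rw [triple_mem_threeSquareReps_normalizedOdd hx hy hz] at hpos hneg
  lia

theorem nine_dvd_two_mul_sum_sub {N x : ℤ} {t : Multiset ℤ}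
    (ht : t ∈ threeSquareReps oddOneModThree (9 * N)) (hx : x ∈ t) : 9 ∣ 2 * t.sum - 3 * x := by
  obtain ⟨hcard, ht, hsum⟩ := ht
  have hdvd : 9 ∣ (t.map fun y ↦ (y - 1) ^ 2).sum := by
    refine Multiset.dvd_sum fun a ha ↦ ?_
    obtain ⟨y, hy, rfl⟩ := Multiset.mem_map.1 ha
    exact pow_dvd_pow_of_dvd (a := (3 : ℤ)) (by grind [(ht y hy).2]) 2
  have hexpand : (t.map fun y ↦ (y - 1) ^ 2).sum = 9 * N - 2 * t.sum + 3 := by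
    simp only [sub_sq, mul_one, one_pow, Multiset.sum_map_add, Multiset.sum_map_sub, hsum,
      multiset_sum_map_mul, Multiset.map_const', Multiset.sum_replicate, hcard]
    norm_num
  have := (ht x hx).2
  lia

theorem exists_scaledReflection_eq {N : ℤ} {t : Multiset ℤ}
    (ht : t ∈ threeSquareReps oddOneModThree (9 * N)) : ∃ s, scaledReflection s = t := by
  have hdiv : ((scaledReflection t).map (· / 9)).map (9 * ·) = scaledReflection t := by
    rw [Multiset.map_map]
    refine (Multiset.map_congr rfl ?_).trans (Multiset.map_id' _)
    refine Multiset.forall_mem_map_iff.2 fun x hx ↦ ?_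
    rw [ht.1]
    exact Int.mul_ediv_cancel' (nine_dvd_two_mul_sum_sub ht hx)
  refine ⟨(scaledReflection t).map (· / 9), Multiset.map_injective
    (mul_right_injective₀ (by norm_num : (9 : ℤ) ≠ 0)) ?_⟩
  rw [← scaledReflection_map_mul, hdiv, scaledReflection_scaledReflection, ht.1]
  norm_num

theorem scaledReflection_mem_threeSquareReps_iff {s : Multiset ℤ} {N : ℤ} :
    scaledReflection s ∈ threeSquareReps oddOneModThree (9 * N) ↔
      s ∈ threeSquareReps {x | Odd x} N ∧ s.sum % 3 = 2 := by
  by_cases hcard : s.card = 3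
  · have hsum : ((scaledReflection s).map (· ^ 2)).sum = 9 * N ↔ (s.map (· ^ 2)).sum = N := by
      rw [sum_sq_scaledReflection, hcard]
      lia
    have hmem (x : ℤ) : 2 * s.sum - 3 * x ∈ oddOneModThree ↔ Odd x ∧ s.sum % 3 = 2 := by
      refine and_congr ?_ ?_ <;> grind
    obtain ⟨x₀, hx₀⟩ := Multiset.card_pos_iff_exists_mem.1 (by lia : 0 < s.card)
    have hforall : (∀ y ∈ scaledReflection s, y ∈ oddOneModThree) ↔
        (∀ x ∈ s, Odd x) ∧ s.sum % 3 = 2 := by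
      rw [scaledReflection, Multiset.forall_mem_map_iff, hcard]
      simp only [Nat.cast_ofNat, hmem]
      exact ⟨fun h ↦ ⟨fun x hx ↦ (h x hx).1, (h x₀ hx₀).2⟩, fun h x hx ↦ ⟨h.1 x hx, h.2⟩⟩
    simp only [reps, mem_ofPred_eq, card_scaledReflection, hcard, hsum, hforall]
    tauto
  · simp [reps, hcard]

theorem image_scaledReflection (N : ℤ) :
    scaledReflection '' {s ∈ threeSquareReps {x | Odd x} N | s.sum % 3 = 2} =
      threeSquareReps oddOneModThree (9 * N) := by
  apply Subset.antisymm
  · rintro _ ⟨s, hs, rfl⟩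
    exact scaledReflection_mem_threeSquareReps_iff.2 hs
  · intro t ht
    obtain ⟨s, rfl⟩ := exists_scaledReflection_eq ht
    exact ⟨s, scaledReflection_mem_threeSquareReps_iff.1 ht, rfl⟩

theorem encard_threeSquareReps_nine_mul {N : ℤ} (hN : N % 3 = 2) :
    (threeSquareReps posOdd (9 * N)).encard = 3 * (threeSquareReps posOdd N).encard := by
  have hdisjoint : Disjoint (threeSquareReps posOddMulThree (9 * N))
      (threeSquareReps oddOneModThree (9 * N)) :=
    disjoint_reps disjoint_posOddMulThree_oddOneModThree three_ne_zero _
  have hprime : (threeSquareReps oddOneModThree (9 * N)).encard =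
      2 * (threeSquareReps posOdd N).encard := by
    rw [← image_scaledReflection, scaledReflection_injective.encard_image,
      setOf_sum_emod_three_eq_union hN, encard_union_eq (disjoint_threeSquareReps_normalizedOdd hN),
      encard_threeSquareReps_normalizedOdd one_ne_zero,
      encard_threeSquareReps_normalizedOdd (by norm_num), two_mul]
  rw [← encard_threeSquareReps_normalizedOdd one_ne_zero,
    threeSquareReps_normalizedOdd_eq_union (by lia), encard_union_eq hdisjoint,
    encard_threeSquareReps_posOddMulThree, hprime]
  ring

theorem hirschhorn_sellers (n : ℕ) : P33 (27 * n + 12) = 3 * P33 (3 * n + 1) := by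
  have hbig : 8 * ((27 * n + 12 : ℕ) : ℤ) + 3 = 9 * (24 * n + 11) := by push_cast; ring
  have hsmall : 8 * ((3 * n + 1 : ℕ) : ℤ) + 3 = 24 * n + 11 := by push_cast; ring
  rw [P33_eq_ncard_threeSquareReps, P33_eq_ncard_threeSquareReps, hbig, hsmall, ncard_def,
    ncard_def, encard_threeSquareReps_nine_mul (by lia), ENat.toNat_mul, ENat.toNat_ofNat]
end
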